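/- Let X be a connected topological manifold (finite-dimensional, second countable, Hausdorff) and let V→X be a topological real vector bundle of finite rank equipped with a metric, i.e. a continuous choice of inner product on each fiber. Then there exist N∈ℕ, a topological real vector bundle W→X equipped with a metric, and an isomorphism of vector bundles V⊕W ≅ X×ℝ^N over X which is a fiberwise isometry, where the trivial bundle X×ℝ^N carries the standard Euclidean metric on each fiber. -/

import Mathlib

open Bundle

/-- A topological real vector bundle of rank `r` over `X`, equipped with a metric:
a continuous choice of inner product on each fiber (continuity expressed through
the trivializations of the bundle). -/
structure MetricVectorBundle (X : Type) [TopologicalSpace X] (r : ℕ) where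
  fiber : X → Type
  [topFiber : ∀ x, TopologicalSpace (fiber x)]
  [addFiber : ∀ x, AddCommGroup (fiber x)]
  [modFiber : ∀ x, Module ℝ (fiber x)]
  [topTotal : TopologicalSpace (Bundle.TotalSpace (Fin r → ℝ) fiber)]
  [isFiberBundle : FiberBundle (Fin r → ℝ) fiber]
  [isVectorBundle : VectorBundle ℝ (Fin r → ℝ) fiber]
  metric : ∀ x, fiber x →ₗ[ℝ] fiber x →ₗ[ℝ] ℝ
  metric_symm : ∀ x v w, metric x v w = metric x w v
  metric_posdef : ∀ x v, v ≠ 0 → 0 < metric x v v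
  metric_continuous : ∀ (e : Trivialization (Fin r → ℝ) (π (Fin r → ℝ) fiber)),
    MemTrivializationAtlas e →
    ContinuousOn (fun p : X × (Fin r → ℝ) × (Fin r → ℝ) =>
      metric p.1 (e.symm p.1 p.2.1) (e.symm p.1 p.2.2))
      {p : X × (Fin r → ℝ) × (Fin r → ℝ) | p.1 ∈ e.baseSet}

attribute [instance] MetricVectorBundle.topFiber MetricVectorBundle.addFiber
  MetricVectorBundle.modFiber MetricVectorBundle.topTotal
  MetricVectorBundle.isFiberBundle MetricVectorBundle.isVectorBundle

/-!
A generic map from an `n`-manifold to `ℝ^m` with `m > n` avoids countably many given maps, since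
a `C¹` map has a range with dense complement. Applied to the partial sums of a partition of unity,
compared with `m` functions modulo integers, this refines every countable open cover by `n + 1`
families of pairwise disjoint open sets. A bundle is trivial over the union of each family, so by
Gram–Schmidt finitely many open sets that cover the base carry orthonormal frames; weighted by the
square roots of a partition of unity, these glue to a finite Parseval frame `t` of the whole bundle.
The analysis map `v ↦ (⟨v, t k⟩)_k` then embeds the bundle isometrically into a trivial bundle, and
the complement is the kernel of the synthesis map `c ↦ ∑ k, c k • t k`. It is the range of a
continuous family of orthogonal projections, and is locally trivial because nearby projections are
conjugate by invertible operators.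
-/

open Filter Module Set Submodule Topology

section GeneralPosition

variable {E F : Type*} [NormedAddCommGroup E] [NormedSpace ℝ E] [FiniteDimensional ℝ E]
  [NormedAddCommGroup F] [NormedSpace ℝ F] [FiniteDimensional ℝ F]

-- Extend `f` to `F` and approximate by a `C¹` map, whose range has dense complement.
lemma dense_setOf_forall_ne_zero_of_isClosedEmbedding {K : Type*} [TopologicalSpace K]
    [CompactSpace K] {j : K → F} (hj : IsClosedEmbedding j) (hFE : finrank ℝ F < finrank ℝ E) :
    Dense {f : C(K, E) | ∀ x, f x ≠ 0} := by
  refine Metric.dense_iff.2 fun f ε hε ↦ ?_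
  obtain ⟨f', hf'⟩ := f.exists_extension hj
  obtain ⟨q, hq, hqf', -⟩ := f'.continuous.exists_contDiff_approx 1 (ε := fun _ ↦ ε / 2)
    continuous_const fun _ ↦ half_pos hε
  obtain ⟨c, hc, hcε⟩ :=
    (hq.dense_compl_range_of_finrank_lt_finrank hFE).exists_dist_lt (0 : E) (half_pos hε)
  let g : C(K, E) := ⟨fun x ↦ q (j x) - c, (hq.continuous.comp hj.continuous).sub continuous_const⟩
  refine ⟨g, (ContinuousMap.dist_lt_iff hε).2 fun x ↦ ?_,
    fun x hx ↦ hc ⟨j x, sub_eq_zero.1 hx⟩⟩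
  calc dist (q (j x) - c) (f x)
      ≤ dist (q (j x) - c) (q (j x)) + dist (q (j x)) (f x) := dist_triangle _ _ _
    _ < ε / 2 + ε / 2 := by
      refine add_lt_add (by simpa [dist_eq_norm] using hcε) ?_
      simpa [← hf'] using hqf' (j x)
    _ = ε := add_halves ε

variable {X : Type*} [TopologicalSpace X]

lemma dense_setOf_forall_mem_ne_zero [NormalSpace X] {K : Set X} (hK : IsCompact K)
    (hKc : IsClosed K) {j : K → F} (hj : IsClosedEmbedding j)
    (hFE : finrank ℝ F < finrank ℝ E) :
    Dense {f : C(X, E) | ∀ x ∈ K, f x ≠ 0} := by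
  have := isCompact_iff_compactSpace.1 hK
  refine fun f ↦ mem_closure_iff_nhds.2 fun s hs ↦ ?_
  have hadd : Continuous fun b : BoundedContinuousFunction X E ↦ f + b.toContinuousMap :=
    ContinuousMap.continuous_of_continuous_uncurry _ <| by
      exact (f.continuous.comp continuous_snd).add continuous_eval
  obtain ⟨ε, hε, hεs⟩ := Metric.mem_nhds_iff.1
    (hadd.tendsto' 0 f (by ext; simp) hs)
  obtain ⟨g, hg0, hgf⟩ := Metric.dense_iff.1
    (dense_setOf_forall_ne_zero_of_isClosedEmbedding hj hFE) (f.restrict K) ε hε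
  obtain ⟨b, hb, hbg⟩ := BoundedContinuousFunction.exists_norm_eq_domRestrict_eq hKc ℝ
    (BoundedContinuousFunction.mkOfCompact (g - f.restrict K))
  refine ⟨f + b.toContinuousMap, hεs ?_, fun x hx ↦ ?_⟩
  · rw [mem_ball_zero_iff, hb, BoundedContinuousFunction.norm_mkOfCompact]
    exact mem_ball_iff_norm.1 hg0
  · have : b x = g ⟨x, hx⟩ - f x := congr($hbg ⟨x, hx⟩)
    simpa [this] using hgf ⟨x, hx⟩

variable [ChartedSpace F X] [T2Space X] [SecondCountableTopology X]

lemma eventually_residual_forall_ne (hFE : finrank ℝ F < finrank ℝ E) (h : C(X, E)) :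
    ∀ᶠ g in residual C(X, E), ∀ x, g x ≠ h x := by
  have := ChartedSpace.locallyCompactSpace F X
  choose K hK hxK hKF using fun x : X ↦
    exists_compact_subset (chartAt F x).open_source (mem_chart_source F x)
  obtain ⟨s, hs, hsX⟩ := TopologicalSpace.countable_cover_nhds
    fun x ↦ mem_interior_iff_mem_nhds.1 (hxK x)
  have hres : ∀ x ∈ s, ∀ᶠ g in residual C(X, E), ∀ y ∈ K x, g y ≠ h y := fun x _ ↦ by
    have hj : IsClosedEmbedding fun y : K x ↦ chartAt F x y :=
      have := isCompact_iff_compactSpace.1 (hK x)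
      ((continuousOn_iff_continuous_domRestrict.1
        ((chartAt F x).continuousOn.mono (hKF x)))).isClosedEmbedding
        ((chartAt F x).injOn.mono (hKF x)).injective
    have hpre : {g : C(X, E) | ∀ y ∈ K x, g y ≠ h y} =
        Homeomorph.subRight h ⁻¹' {f | ∀ y ∈ K x, f y ≠ 0} := by
      ext; simp [sub_eq_zero]
    have hopen : IsOpen {f : C(X, E) | ∀ y ∈ K x, f y ≠ 0} :=
      ContinuousMap.isOpen_setOfPred_mapsTo (hK x) (isOpen_compl_singleton (x := (0 : E)))
    refine residual_of_dense_open ?_ ?_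
    · exact hpre ▸ hopen.preimage (Homeomorph.subRight h).continuous
    · exact hpre ▸ (dense_setOf_forall_mem_ne_zero (hK x) (hK x).isClosed hj hFE).preimage
        (Homeomorph.subRight h).isOpenMap
  filter_upwards [(eventually_countable_ball hs).2 hres] with g hg y
  obtain ⟨x, hx, hy⟩ := mem_iUnion₂.1 (hsX.symm ▸ mem_univ y)
  exact hg x hx y hy

lemma exists_continuousMap_forall_ne {ι : Type*} [Countable ι]
    (hFE : finrank ℝ F < finrank ℝ E) (h : ι → C(X, E)) : ∃ g : C(X, E), ∀ i x, g x ≠ h i x := by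
  have := ChartedSpace.locallyCompactSpace F X
  exact (dense_of_mem_residual <| eventually_countable_forall.2 fun i ↦
    eventually_residual_forall_ne (F := F) hFE (h i)).nonempty

end GeneralPosition

section CoveringDimension

lemma exists_add_intCast_lt_lt {s : ℕ → ℝ} (hs₀ : s 0 = 0) (hs₁ : ∀ᶠ n in atTop, s n = 1) {y : ℝ}
    (hy : ∀ n (k : ℤ), y ≠ s n + k) : ∃ n, ∃ k : ℤ, s n + k < y ∧ y < s (n + 1) + k := by
  classical
  have hex : ∃ n, y < s n + ⌊y⌋ := by
    obtain ⟨n, hn⟩ := hs₁.exists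
    exact ⟨n, by linarith [Int.lt_floor_add_one y]⟩
  obtain ⟨n, hn⟩ : ∃ n, Nat.find hex = n + 1 := Nat.exists_eq_succ_of_ne_zero fun h₀ ↦ by
    have := h₀ ▸ Nat.find_spec hex
    linarith [Int.floor_le y]
  refine ⟨n, ⌊y⌋, lt_of_le_of_ne (not_lt.1 (Nat.find_min hex (by omega))) (hy n ⌊y⌋).symm, ?_⟩
  simpa [hn] using Nat.find_spec hex

lemma le_of_add_intCast_lt_lt {s : ℕ → ℝ} (hs : Monotone s) (hs₀ : s 0 = 0)
    (hs₁ : ∀ᶠ n in atTop, s n = 1) {y : ℝ} {i j : ℕ} {k l : ℤ}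
    (hi : s i + k < y ∧ y < s (i + 1) + k) (hj : s j + l < y ∧ y < s (j + 1) + l) : i ≤ j := by
  have hnonneg (n : ℕ) : 0 ≤ s n := hs₀ ▸ hs n.zero_le
  have hle_one (n : ℕ) : s n ≤ 1 := hs.ge_of_tendsto (tendsto_nhds_of_eventually_eq hs₁) n
  have hk : ⌊y⌋ = k := Int.floor_eq_iff.2
    ⟨by linarith [hnonneg i], by linarith [hle_one (i + 1)]⟩
  have hl : ⌊y⌋ = l := Int.floor_eq_iff.2
    ⟨by linarith [hnonneg j], by linarith [hle_one (j + 1)]⟩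
  obtain rfl : k = l := hk.symm.trans hl
  exact Nat.lt_add_one_iff.1 (hs.reflect_lt (by linarith))

variable {X : Type*} [TopologicalSpace X]

/-- The partial sums `ρ 0 + ⋯ + ρ (n - 1)` of a partition of unity. They cut the unit interval into
pieces, the `i`-th of which is nondegenerate exactly over the support of `ρ i`. -/
def partialSum (ρ : PartitionOfUnity ℕ X) (n : ℕ) : C(X, ℝ) :=
  ∑ j ∈ Finset.range n, ρ j

lemma partialSum_zero (ρ : PartitionOfUnity ℕ X) (x : X) : partialSum ρ 0 x = 0 := by
  simp [partialSum]

lemma partialSum_succ (ρ : PartitionOfUnity ℕ X) (n : ℕ) (x : X) :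
    partialSum ρ (n + 1) x = partialSum ρ n x + ρ n x := by
  simp [partialSum, Finset.sum_range_succ]

lemma monotone_partialSum (ρ : PartitionOfUnity ℕ X) (x : X) :
    Monotone fun n ↦ partialSum ρ n x :=
  monotone_nat_of_le_succ fun n ↦ by simp [partialSum_succ, ρ.nonneg]

lemma eventually_partialSum_eq_one (ρ : PartitionOfUnity ℕ X) (x : X) :
    ∀ᶠ n in atTop, partialSum ρ n x = 1 := by
  obtain ⟨n, hn⟩ := (ρ.finsupport x).exists_nat_subset_range
  filter_upwards [eventually_ge_atTop n] with m hm
  simpa [partialSum] using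
    ρ.sum_finsupport' (mem_univ x) (hn.trans (Finset.range_subset_range.2 hm))

/-- The set of points at which `y` lies strictly between the translates by some integer of
the `i`-th and the `i + 1`-st partial sum of `ρ`. -/
def slab (ρ : PartitionOfUnity ℕ X) (y : C(X, ℝ)) (i : ℕ) : Set X :=
  ⋃ k : ℤ, {x | partialSum ρ i x + k < y x ∧ y x < partialSum ρ (i + 1) x + k}

lemma isOpen_slab (ρ : PartitionOfUnity ℕ X) (y : C(X, ℝ)) (i : ℕ) : IsOpen (slab ρ y i) :=
  isOpen_iUnion fun k ↦
    (isOpen_lt (f := fun x ↦ partialSum ρ i x + k) (by fun_prop) y.continuous).inter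
      (isOpen_lt (g := fun x ↦ partialSum ρ (i + 1) x + k) y.continuous (by fun_prop))

lemma slab_subset_support (ρ : PartitionOfUnity ℕ X) (y : C(X, ℝ)) (i : ℕ) :
    slab ρ y i ⊆ Function.support (ρ i) := by
  intro x hx hρ
  obtain ⟨k, hk⟩ := mem_iUnion.1 hx
  rw [mem_ofPred_eq, partialSum_succ, hρ] at hk
  linarith

lemma pairwise_disjoint_slab (ρ : PartitionOfUnity ℕ X) (y : C(X, ℝ)) :
    Pairwise (Function.onFun Disjoint (slab ρ y)) := by
  refine fun i j hij ↦ disjoint_left.2 fun x hi hj ↦ hij ?_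
  obtain ⟨k, hk⟩ := mem_iUnion.1 hi
  obtain ⟨l, hl⟩ := mem_iUnion.1 hj
  have hle {i j : ℕ} {k l : ℤ} := le_of_add_intCast_lt_lt (i := i) (j := j) (k := k) (l := l)
    (y := y x) (monotone_partialSum ρ x) (partialSum_zero ρ x) (eventually_partialSum_eq_one ρ x)
  exact (hle hk hl).antisymm (hle hl hk)

variable (F : Type*) [NormedAddCommGroup F] [NormedSpace ℝ F] [FiniteDimensional ℝ F]
  [ChartedSpace F X] [T2Space X] [SecondCountableTopology X]

lemma exists_iUnion_slab_eq_univ (ρ : PartitionOfUnity ℕ X) :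
    ∃ y : Fin (finrank ℝ F + 1) → C(X, ℝ), ⋃ a, ⋃ i, slab ρ (y a) i = univ := by
  obtain ⟨g, hg⟩ := exists_continuousMap_forall_ne (F := F) (X := X)
    (E := Fin (finrank ℝ F + 1) → ℝ) (by simp) fun nk : Fin (finrank ℝ F + 1) → ℕ × ℤ ↦
      ContinuousMap.pi fun a ↦ partialSum ρ (nk a).1 + ContinuousMap.const X ((nk a).2 : ℝ)
  refine ⟨fun a ↦ (ContinuousMap.eval a).comp g, eq_univ_of_forall fun x ↦ ?_⟩
  obtain ⟨a, ha⟩ : ∃ a, ∀ n (k : ℤ), g x a ≠ partialSum ρ n x + k := by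
    by_contra! h
    choose n k hnk using h
    exact hg (fun a ↦ (n a, k a)) x (funext hnk)
  obtain ⟨i, k, hik⟩ :=
    exists_add_intCast_lt_lt (partialSum_zero ρ x) (eventually_partialSum_eq_one ρ x) ha
  exact mem_iUnion₂.2 ⟨a, i, mem_iUnion.2 ⟨k, hik⟩⟩

lemma exists_pairwise_disjoint_open_refinement {ι : Type*} [Countable ι] {U : ι → Set X}
    (hU : ∀ i, IsOpen (U i)) (hUX : ⋃ i, U i = univ) :
    ∃ V : Fin (finrank ℝ F + 1) → ι → Set X, (∀ a i, IsOpen (V a i)) ∧ (∀ a i, V a i ⊆ U i) ∧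
      (∀ a, Pairwise (Function.onFun Disjoint (V a))) ∧ ⋃ a, ⋃ i, V a i = univ := by
  have := ChartedSpace.locallyCompactSpace F X
  obtain ⟨f, hf⟩ := exists_injective_nat ι
  obtain ⟨ρ, hρ⟩ := PartitionOfUnity.exists_isSubordinate isClosed_univ
    (fun n ↦ ⋃ i, ⋃ _ : f i = n, U i) (fun n ↦ isOpen_iUnion fun i ↦ isOpen_iUnion fun _ ↦ hU i)
    (fun x _ ↦ by simpa using iUnion_eq_univ_iff.1 hUX x)
  have hsub (y : C(X, ℝ)) (n : ℕ) : slab ρ y n ⊆ ⋃ i, ⋃ _ : f i = n, U i :=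
    (slab_subset_support ρ y n).trans <| (subset_tsupport _).trans (hρ n)
  obtain ⟨y, hy⟩ := exists_iUnion_slab_eq_univ F ρ
  refine ⟨fun a i ↦ slab ρ (y a) (f i), fun a i ↦ isOpen_slab ρ (y a) (f i), fun a i x hx ↦ ?_,
    fun a ↦ (pairwise_disjoint_slab ρ (y a)).comp_of_injective hf, ?_⟩
  · simpa [hf.eq_iff] using hsub _ _ hx
  · refine eq_univ_of_forall fun x ↦ ?_
    obtain ⟨a, n, hn⟩ := mem_iUnion₂.1 (hy.symm ▸ mem_univ x)
    obtain ⟨i, rfl, -⟩ := mem_iUnion₂.1 (hsub _ _ hn)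
    exact mem_iUnion₂.2 ⟨a, i, hn⟩

end CoveringDimension

section OrthonormalFamily

variable {E κ : Type*} [AddCommGroup E] [Module ℝ E] {q : E →ₗ[ℝ] E →ₗ[ℝ] ℝ} {u : κ → E}

/-- A finite family `t` is a Parseval frame for the bilinear form `q` if the coefficients
`q v (t k)` compute `q` by Parseval's identity. -/
def IsParsevalFrame [Fintype κ] (q : E →ₗ[ℝ] E →ₗ[ℝ] ℝ) (t : κ → E) : Prop :=
  ∀ v w, ∑ k, q v (t k) * q w (t k) = q v w

/-- Orthonormality with respect to a bilinear form, for real vector spaces that carry no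
inner product as an instance, such as the fibers of a `MetricVectorBundle`. -/
def IsOrthonormalFamily [DecidableEq κ] (q : E →ₗ[ℝ] E →ₗ[ℝ] ℝ) (u : κ → E) : Prop :=
  ∀ i j, q (u i) (u j) = if i = j then 1 else 0

namespace IsOrthonormalFamily

lemma apply [DecidableEq κ] (hu : IsOrthonormalFamily q u) (i j : κ) :
    q (u i) (u j) = if i = j then 1 else 0 :=
  hu i j

lemma linearIndependent [DecidableEq κ] (hu : IsOrthonormalFamily q u) :
    LinearIndependent ℝ u :=
  linearIndependent_iff'.2 fun s c hc i hi ↦ by simpa [hu.apply, hi] using congr(q $hc (u i))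

lemma isParsevalFrame [Fintype κ] [DecidableEq κ] [FiniteDimensional ℝ E]
    (hu : IsOrthonormalFamily q u) (hcard : Fintype.card κ = finrank ℝ E) :
    IsParsevalFrame q u := by
  have hspan (v : E) : v ∈ span ℝ (range u) :=
    hu.linearIndependent.span_eq_top_of_card_eq_finrank' hcard ▸ mem_top
  intro v w
  obtain ⟨a, rfl⟩ := (mem_span_range_iff_exists_fun ℝ).1 (hspan v)
  obtain ⟨b, rfl⟩ := (mem_span_range_iff_exists_fun ℝ).1 (hspan w)
  simp [hu.apply, mul_comm]

lemma snoc {k : ℕ} {u : Fin k → E} (hu : IsOrthonormalFamily q u)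
    (hsymm : ∀ v w, q v w = q w v) {v : E} (hv : q v v = 1) (hvu : ∀ i, q v (u i) = 0) :
    IsOrthonormalFamily q (Fin.snoc u v : Fin (k + 1) → E) := by
  intro i j
  induction i using Fin.lastCases <;> induction j using Fin.lastCases <;>
    simp [hu.apply, hv, hvu, hsymm (u _) v, Fin.castSucc_ne_last, (Fin.castSucc_ne_last _).symm]

end IsOrthonormalFamily

lemma isParsevalFrame_sqrt_smul {ι : Type*} [Fintype ι] [Fintype κ] {c : ι → ℝ} (hc : ∀ a, 0 ≤ c a)
    (hsum : ∑ a, c a = 1) {u : ι → κ → E} (hu : ∀ a, c a ≠ 0 → IsParsevalFrame q (u a)) :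
    IsParsevalFrame q fun k : ι × κ ↦ √(c k.1) • u k.1 k.2 := by
  intro v w
  have hterm (a : ι) :
      ∑ j, q v (√(c a) • u a j) * q w (√(c a) • u a j) = c a * q v w := by
    rcases eq_or_ne (c a) 0 with ha | ha
    · simp [ha]
    · simp_rw [← hu a ha v w, Finset.mul_sum, map_smul, smul_eq_mul, mul_mul_mul_comm,
        Real.mul_self_sqrt (hc a)]
  rw [Fintype.sum_prod_type, Finset.sum_congr rfl fun a _ ↦ hterm a, ← Finset.sum_mul, hsum,
    one_mul]

/-- The next vector of the Gram–Schmidt process for the form `q`: the component of `v`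
orthogonal to the family `u`, normalized. -/
noncomputable def gramSchmidtNext [Fintype κ] (q : E →ₗ[ℝ] E →ₗ[ℝ] ℝ) (u : κ → E) (v : E) : E :=
  let w := v - ∑ i, q v (u i) • u i
  (√(q w w))⁻¹ • w

lemma gramSchmidtNext_mem [Fintype κ] {p : Submodule ℝ E} (hu : ∀ i, u i ∈ p) {v : E}
    (hv : v ∈ p) : gramSchmidtNext q u v ∈ p :=
  p.smul_mem _ <| p.sub_mem hv <| p.sum_mem fun i _ ↦ p.smul_mem _ (hu i)

lemma apply_gramSchmidtNext_left [Fintype κ] [DecidableEq κ] (hu : IsOrthonormalFamily q u)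
    (v : E) (i : κ) : q (gramSchmidtNext q u v) (u i) = 0 := by
  simp [gramSchmidtNext, hu.apply]

lemma sub_sum_smul_ne_zero [Fintype κ] {v : E} (hv : v ∉ span ℝ (range u)) (c : κ → ℝ) :
    v - ∑ i, c i • u i ≠ 0 := fun h ↦
  hv <| sub_eq_zero.1 h ▸ sum_mem fun i _ ↦ smul_mem _ _ (subset_span (mem_range_self i))

lemma apply_gramSchmidtNext_self [Fintype κ] (hpos : ∀ v, v ≠ 0 → 0 < q v v) {v : E}
    (hv : v ∉ span ℝ (range u)) : q (gramSchmidtNext q u v) (gramSchmidtNext q u v) = 1 := by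
  have hw := hpos _ (sub_sum_smul_ne_zero hv fun i ↦ q v (u i))
  simp only [gramSchmidtNext, map_smul, LinearMap.smul_apply, smul_eq_mul]
  rw [← mul_assoc, ← mul_inv, Real.mul_self_sqrt hw.le, inv_mul_cancel₀ hw.ne']

variable {B : Type*} [TopologicalSpace B] [TopologicalSpace E] [IsTopologicalAddGroup E]
  [ContinuousSMul ℝ E] {q : B → E →ₗ[ℝ] E →ₗ[ℝ] ℝ} {U : Set B}

lemma continuousOn_gramSchmidtNext [Fintype κ] (hpos : ∀ x ∈ U, ∀ v, v ≠ 0 → 0 < q x v v)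
    (hq : ContinuousOn (fun p : B × E × E ↦ q p.1 p.2.1 p.2.2) {p | p.1 ∈ U})
    {u : κ → B → E} (hu : ∀ i, ContinuousOn (u i) U) {v : E}
    (hv : ∀ x ∈ U, v ∉ span ℝ (range fun i ↦ u i x)) :
    ContinuousOn (fun x ↦ gramSchmidtNext (q x) (fun i ↦ u i x) v) U := by
  have hcomp {f g : B → E} (hf : ContinuousOn f U) (hg : ContinuousOn g U) :
      ContinuousOn (fun x ↦ q x (f x) (g x)) U :=
    hq.comp (continuousOn_id.prodMk (hf.prodMk hg)) fun _ hx ↦ hx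
  have hw : ContinuousOn (fun x ↦ v - ∑ i, q x v (u i x) • u i x) U :=
    continuousOn_const.sub <| continuousOn_finsetSum _ fun i _ ↦
      (hcomp continuousOn_const (hu i)).smul (hu i)
  refine ((hcomp hw hw).sqrt.inv₀ fun x hx ↦ ?_).smul hw
  exact (Real.sqrt_pos.2 <| hpos x hx _ <| sub_sum_smul_ne_zero (hv x hx) _).ne'

lemma exists_continuousOn_isOrthonormalFamily (hsymm : ∀ x ∈ U, ∀ v w, q x v w = q x w v)
    (hpos : ∀ x ∈ U, ∀ v, v ≠ 0 → 0 < q x v v)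
    (hq : ContinuousOn (fun p : B × E × E ↦ q p.1 p.2.1 p.2.2) {p | p.1 ∈ U})
    {k : ℕ} {b : Fin k → E} (hb : LinearIndependent ℝ b) :
    ∃ u : Fin k → B → E, (∀ i, ContinuousOn (u i) U) ∧
      (∀ x ∈ U, IsOrthonormalFamily (q x) fun i ↦ u i x) ∧
      ∀ i x, u i x ∈ span ℝ (range b) := by
  induction k with
  | zero => exact ⟨finZeroElim, finZeroElim, fun x _ ↦ finZeroElim, finZeroElim⟩
  | succ k ih =>
    obtain ⟨hinit, hlast⟩ := linearIndependent_finSucc'.1 hb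
    obtain ⟨u, hu, hortho, hmem⟩ := ih hinit
    have hinit_le : span ℝ (range (Fin.init b)) ≤ span ℝ (range b) :=
      span_mono (range_comp_subset_range _ _)
    have hv (x : B) : b (Fin.last k) ∉ span ℝ (range fun i ↦ u i x) := fun h ↦
      hlast <| span_le.2 (range_subset_iff.2 fun i ↦ hmem i x) h
    let v (x : B) : E := gramSchmidtNext (q x) (fun i ↦ u i x) (b (Fin.last k))
    refine ⟨Fin.snoc u v, fun i ↦ ?_, fun x hx ↦ ?_, fun i x ↦ ?_⟩
    · induction i using Fin.lastCases with
      | last => simpa using continuousOn_gramSchmidtNext hpos hq hu fun x _ ↦ hv x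
      | cast i => simpa using hu i
    · have hsnoc : (fun i ↦ (Fin.snoc u v : Fin (k + 1) → B → E) i x) =
          Fin.snoc (fun i ↦ u i x) (v x) := by
        ext i
        induction i using Fin.lastCases <;> simp
      exact hsnoc ▸ (hortho x hx).snoc (hsymm x hx) (apply_gramSchmidtNext_self (hpos x hx) (hv x))
        (apply_gramSchmidtNext_left (hortho x hx) _)
    · induction i using Fin.lastCases with
      | last =>
        simpa using gramSchmidtNext_mem (fun i ↦ hinit_le (hmem i x))
          (subset_span (mem_range_self _))
      | cast i => simpa using hinit_le (hmem i x)

end OrthonormalFamily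

section TotalSpace

variable {𝕜 B F : Type*} {E : B → Type*} [NontriviallyNormedField 𝕜] [TopologicalSpace B]
  [NormedAddCommGroup F] [NormedSpace 𝕜 F] [TopologicalSpace (TotalSpace F E)]
  [∀ x, TopologicalSpace (E x)] [∀ x, AddCommGroup (E x)] [∀ x, Module 𝕜 (E x)]
  [FiberBundle F E] [VectorBundle 𝕜 F E]
  {Y : Type*} [TopologicalSpace Y] {p : Y → B} {y₀ : Y}

variable (𝕜) in
lemma continuousAt_totalSpaceMk_iff {σ : ∀ y, E (p y)} :
    ContinuousAt (fun y ↦ (⟨p y, σ y⟩ : TotalSpace F E)) y₀ ↔ ContinuousAt p y₀ ∧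
      ContinuousAt (fun y ↦ (trivializationAt F E (p y₀)).linearMapAt 𝕜 (p y) (σ y)) y₀ := by
  refine (FiberBundle.continuousAt_totalSpace F _).trans <| and_congr_right fun hp ↦ ?_
  refine continuousAt_congr ?_
  filter_upwards [hp.eventually_mem ((trivializationAt F E (p y₀)).open_baseSet.mem_nhds
    (FiberBundle.mem_baseSet_trivializationAt' _))] with y hy
  rw [Trivialization.coe_linearMapAt_of_mem _ hy]

lemma continuousAt_totalSpaceMk_smul {c : Y → 𝕜} {σ : ∀ y, E (p y)} (hc : ContinuousAt c y₀)
    (hσ : ContinuousAt (fun y ↦ (⟨p y, σ y⟩ : TotalSpace F E)) y₀) :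
    ContinuousAt (fun y ↦ (⟨p y, c y • σ y⟩ : TotalSpace F E)) y₀ := by
  rw [continuousAt_totalSpaceMk_iff 𝕜] at hσ ⊢
  simpa only [map_smul] using ⟨hσ.1, hc.smul hσ.2⟩

lemma continuousAt_totalSpaceMk_sum_smul {κ : Type*} [Fintype κ] {c : κ → Y → 𝕜}
    {σ : κ → ∀ y, E (p y)} (hp : ContinuousAt p y₀) (hc : ∀ k, ContinuousAt (c k) y₀)
    (hσ : ∀ k, ContinuousAt (fun y ↦ (⟨p y, σ k y⟩ : TotalSpace F E)) y₀) :
    ContinuousAt (fun y ↦ (⟨p y, ∑ k, c k y • σ k y⟩ : TotalSpace F E)) y₀ := by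
  simp only [continuousAt_totalSpaceMk_iff 𝕜] at hσ ⊢
  simpa only [map_sum, map_smul] using
    ⟨hp, tendsto_finsetSum _ fun k _ ↦ (hc k).smul (hσ k).2⟩

end TotalSpace

namespace MetricVectorBundle

variable {X : Type} [TopologicalSpace X] {r : ℕ} (V : MetricVectorBundle X r)

lemma continuousAt_metric {Y : Type*} [TopologicalSpace Y] {p : Y → X} {y₀ : Y}
    {σ τ : ∀ y, V.fiber (p y)}
    (hσ : ContinuousAt (fun y ↦ (⟨p y, σ y⟩ : TotalSpace (Fin r → ℝ) V.fiber)) y₀)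
    (hτ : ContinuousAt (fun y ↦ (⟨p y, τ y⟩ : TotalSpace (Fin r → ℝ) V.fiber)) y₀) :
    ContinuousAt (fun y ↦ V.metric (p y) (σ y) (τ y)) y₀ := by
  rw [FiberBundle.continuousAt_totalSpace] at hσ hτ
  set e := trivializationAt (Fin r → ℝ) V.fiber (p y₀)
  have hmem : e.baseSet ∈ 𝓝 (p y₀) :=
    e.open_baseSet.mem_nhds (FiberBundle.mem_baseSet_trivializationAt' _)
  have hmetric := (V.metric_continuous e inferInstance).continuousAt
    (continuousAt_fst.eventually_mem (x := (p y₀, (e ⟨p y₀, σ y₀⟩).2, (e ⟨p y₀, τ y₀⟩).2)) hmem)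
  refine (hmetric.comp_of_eq (hσ.1.prodMk (hσ.2.prodMk hτ.2)) rfl).congr ?_
  filter_upwards [hσ.1.eventually_mem hmem] with y hy
  simp only [Function.comp_apply, e.symm_apply_apply_mk hy]

lemma finrank_fiber (x : X) : finrank ℝ (V.fiber x) = r := by
  simpa using ((trivializationAt (Fin r → ℝ) V.fiber x).linearEquivAt ℝ x
    (FiberBundle.mem_baseSet_trivializationAt' x)).finrank_eq

instance finiteDimensional_fiber (x : X) : FiniteDimensional ℝ (V.fiber x) :=
  ((trivializationAt (Fin r → ℝ) V.fiber x).linearEquivAt ℝ x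
    (FiberBundle.mem_baseSet_trivializationAt' x)).symm.finiteDimensional

/-- `V` admits over `U` a frame of sections, continuous at the points of `U`, that is
orthonormal in each fiber. -/
def HasOrthonormalFrameOn (U : Set X) : Prop :=
  ∃ u : Fin r → ∀ x, V.fiber x, ∀ x ∈ U, IsOrthonormalFamily (V.metric x) (fun j ↦ u j x) ∧
    ∀ j, ContinuousAt (fun y ↦ (⟨y, u j y⟩ : TotalSpace (Fin r → ℝ) V.fiber)) x

variable {V}

lemma HasOrthonormalFrameOn.mono {U U' : Set X} (h : V.HasOrthonormalFrameOn U) (hU : U' ⊆ U) :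
    V.HasOrthonormalFrameOn U' :=
  h.imp fun _ hu x hx ↦ hu x (hU hx)

lemma HasOrthonormalFrameOn.iUnion {ι : Type*} {U : ι → Set X} (hopen : ∀ i, IsOpen (U i))
    (hdisj : Pairwise (Function.onFun Disjoint U)) (h : ∀ i, V.HasOrthonormalFrameOn (U i)) :
    V.HasOrthonormalFrameOn (⋃ i, U i) := by
  classical
  choose u hu using h
  let u' (j : Fin r) (x : X) : V.fiber x := if hx : ∃ i, x ∈ U i then u hx.choose j x else 0
  have heq {i : ι} {x : X} (hx : x ∈ U i) (j : Fin r) : u' j x = u i j x := by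
    have hex : ∃ i, x ∈ U i := ⟨i, hx⟩
    simp only [u', dif_pos hex, hdisj.eq (not_disjoint_iff.2 ⟨x, hex.choose_spec, hx⟩)]
  refine ⟨u', fun x hx ↦ ?_⟩
  obtain ⟨i, hi⟩ := mem_iUnion.1 hx
  refine ⟨by simpa only [heq hi] using (hu i x hi).1, fun j ↦ ((hu i x hi).2 j).congr ?_⟩
  filter_upwards [(hopen i).mem_nhds hi] with y hy
  rw [heq hy]

variable (V)

lemma hasOrthonormalFrameOn_baseSet (x : X) :
    V.HasOrthonormalFrameOn (trivializationAt (Fin r → ℝ) V.fiber x).baseSet := by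
  set e := trivializationAt (Fin r → ℝ) V.fiber x
  let q (y : X) := (V.metric y).compl₁₂ (e.symmₗ ℝ y) (e.symmₗ ℝ y)
  have hq {y : X} (hy : y ∈ e.baseSet) (v w : Fin r → ℝ) :
      q y v w = V.metric y (e.symm y v) (e.symm y w) := by
    simp only [q, LinearMap.compl₁₂_apply, e.symmₗ_apply hy]
  have hpos (y) (hy : y ∈ e.baseSet) (v : Fin r → ℝ) (hv : v ≠ 0) : 0 < q y v v := by
    refine V.metric_posdef y (e.symmₗ ℝ y v) fun h ↦ hv ?_
    rw [← e.linearMapAt_symmₗ (R := ℝ) hy v, h, map_zero]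
  obtain ⟨u, hu, hortho, -⟩ := exists_continuousOn_isOrthonormalFamily
    (fun y _ v w ↦ V.metric_symm y _ _) hpos
    ((V.metric_continuous e inferInstance).congr fun p hp ↦ hq hp _ _)
    (Pi.basisFun ℝ (Fin r)).linearIndependent
  exact ⟨fun j y ↦ e.symm y (u j y), fun y hy ↦
    ⟨fun i j ↦ (hq hy _ _).symm.trans (hortho y hy i j), fun j ↦
      (e.continuousOn_symm.comp (continuousOn_id.prodMk (hu j)) fun _ hz ↦ ⟨hz, mem_univ _⟩
        ).continuousAt (e.open_baseSet.mem_nhds hy)⟩⟩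

lemma exists_finite_open_cover_hasOrthonormalFrameOn (F : Type*) [NormedAddCommGroup F]
    [NormedSpace ℝ F] [FiniteDimensional ℝ F] [ChartedSpace F X] [T2Space X]
    [SecondCountableTopology X] :
    ∃ O : Fin (finrank ℝ F + 1) → Set X, (∀ a, IsOpen (O a)) ∧
      (∀ a, V.HasOrthonormalFrameOn (O a)) ∧ ⋃ a, O a = univ := by
  let U (x : X) : Set X := (trivializationAt (Fin r → ℝ) V.fiber x).baseSet
  have hU (x : X) : IsOpen (U x) := (trivializationAt (Fin r → ℝ) V.fiber x).open_baseSet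
  obtain ⟨s, hs, hsX⟩ := TopologicalSpace.countable_cover_nhds fun x ↦
    (hU x).mem_nhds (FiberBundle.mem_baseSet_trivializationAt' x)
  have := hs.to_subtype
  obtain ⟨W, hW, hWU, hdisj, hWX⟩ := exists_pairwise_disjoint_open_refinement F
    (U := fun x : s ↦ U x) (fun x ↦ hU x) ((iUnion_subtype _ _).trans hsX)
  exact ⟨fun a ↦ ⋃ i, W a i, fun a ↦ isOpen_iUnion (hW a), fun a ↦ .iUnion (hW a) (hdisj a)
    fun i ↦ (V.hasOrthonormalFrameOn_baseSet i).mono (hWU a i), hWX⟩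

lemma exists_continuous_isParsevalFrame [NormalSpace X] {ι : Type*} [Fintype ι] {O : ι → Set X}
    (hO : ∀ a, IsOpen (O a)) (hframe : ∀ a, V.HasOrthonormalFrameOn (O a))
    (hOX : ⋃ a, O a = univ) :
    ∃ t : ι × Fin r → ∀ x, V.fiber x,
      (∀ k, Continuous fun x ↦ (⟨x, t k x⟩ : TotalSpace (Fin r → ℝ) V.fiber)) ∧
      ∀ x, IsParsevalFrame (V.metric x) fun k ↦ t k x := by
  choose u hu using hframe
  obtain ⟨ρ, hρ⟩ := PartitionOfUnity.exists_isSubordinate_of_locallyFinite isClosed_univ O hO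
    (locallyFinite_of_finite O) hOX.ge
  refine ⟨fun k x ↦ √(ρ k.1 x) • u k.1 k.2 x, fun ⟨a, j⟩ ↦ continuous_iff_continuousAt.2
    fun x ↦ ?_, fun x ↦ ?_⟩
  · by_cases hx : x ∈ tsupport (ρ a)
    · exact continuousAt_totalSpaceMk_smul (ρ a).continuous.sqrt.continuousAt
        ((hu a x (hρ a hx)).2 j)
    · refine (Trivialization.continuous_zeroSection ℝ (E := V.fiber)).continuousAt.congr ?_
      filter_upwards [(isClosed_tsupport (ρ a)).isOpen_compl.mem_nhds hx] with y hy
      simp [zeroSection, image_eq_zero_of_notMem_tsupport hy]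
  · have hsum : ∑ a, ρ a x = 1 := by
      simpa [finsum_eq_sum_of_fintype] using ρ.sum_eq_one (mem_univ x)
    refine isParsevalFrame_sqrt_smul (u := fun a j ↦ u a j x) (fun a ↦ ρ.nonneg a x) hsum
      fun a ha ↦ ?_
    exact (hu a x (hρ a (subset_tsupport _ ha))).1.isParsevalFrame (by simp [V.finrank_fiber])

end MetricVectorBundle

section ProjectionIntertwiner

variable {R : Type*} [Ring R] {p q : R}

/-- The element carrying the range of the idempotent `q` to that of the idempotent `p`, and the
kernel of `q` to that of `p`. It is `1` for `p = q`, hence invertible for `p` close to `q`. -/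
def projIntertwiner (p q : R) : R := p * q + (1 - p) * (1 - q)

lemma projIntertwiner_self (hp : IsIdempotentElem p) : projIntertwiner p p = 1 := by
  rw [projIntertwiner, hp.eq, hp.one_sub.eq, add_sub_cancel]

lemma mul_projIntertwiner (hp : IsIdempotentElem p) : p * projIntertwiner p q = p * q := by
  rw [projIntertwiner, mul_add, ← mul_assoc, ← mul_assoc, hp.eq, hp.mul_one_sub_self, zero_mul,
    add_zero]

lemma projIntertwiner_mul (hq : IsIdempotentElem q) : projIntertwiner p q * q = p * q := by
  rw [projIntertwiner, add_mul, mul_assoc, mul_assoc, hq.eq, hq.one_sub_mul_self, mul_zero,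
    add_zero]

lemma mul_mul_inverse_projIntertwiner (hp : IsIdempotentElem p)
    (h : IsUnit (projIntertwiner p q)) : p * q * Ring.inverse (projIntertwiner p q) = p := by
  rw [← mul_projIntertwiner hp, Ring.mul_inverse_cancel_right _ _ h]

lemma inverse_projIntertwiner_mul_mul (hq : IsIdempotentElem q)
    (h : IsUnit (projIntertwiner p q)) : Ring.inverse (projIntertwiner p q) * (p * q) = q := by
  rw [← projIntertwiner_mul hq, Ring.inverse_mul_cancel_left _ _ h]

end ProjectionIntertwiner

section ProjectionBundle

variable {𝕜 B E F : Type*} [NontriviallyNormedField 𝕜] [TopologicalSpace B]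
  [NormedAddCommGroup E] [NormedSpace 𝕜 E]

/-- The fibers of the subbundle of `B × E` cut out by a family of projections. -/
abbrev RangeFiber (P : B → E →L[𝕜] E) (x : B) : Type _ := (P x).range

instance rangeFiberTotalSpaceTopology (P : B → E →L[𝕜] E) :
    TopologicalSpace (TotalSpace F (RangeFiber P)) :=
  .induced (fun p ↦ (p.proj, (p.snd : E))) inferInstance

lemma isInducing_rangeFiber (P : B → E →L[𝕜] E) :
    IsInducing fun p : TotalSpace F (RangeFiber P) ↦ (p.proj, (p.snd : E)) :=
  ⟨rfl⟩

lemma isInducing_totalSpaceMk_rangeFiber (P : B → E →L[𝕜] E) (x : B) :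
    IsInducing (TotalSpace.mk (F := F) (E := RangeFiber P) x) :=
  (isInducing_rangeFiber P).of_comp_iff.1 <|
    (isInducing_prodMkRight x).comp IsInducing.subtypeVal

variable [NormedAddCommGroup F] [NormedSpace 𝕜 F] [CompleteSpace E] {P : B → E →L[𝕜] E}

lemma isOpen_setOf_isUnit_projIntertwiner (hP : Continuous P) (q : E →L[𝕜] E) :
    IsOpen {x | IsUnit (projIntertwiner (P x) q)} :=
  Units.isOpen.preimage (f := fun x ↦ projIntertwiner (P x) q) (by unfold projIntertwiner; fun_prop)

lemma continuousOn_inverse_projIntertwiner (hP : Continuous P) (q : E →L[𝕜] E) :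
    ContinuousOn (fun x ↦ Ring.inverse (projIntertwiner (P x) q))
      {x | IsUnit (projIntertwiner (P x) q)} := fun x ⟨u, hu⟩ ↦
  have hA : Continuous fun x ↦ projIntertwiner (P x) q := by unfold projIntertwiner; fun_prop
  ((NormedRing.inverse_continuousAt u).comp_of_eq hA.continuousAt hu.symm).continuousWithinAt

/-- The trivialization of the bundle of ranges of `P` that compares the fiber at a nearby point
with the fiber at `x₀` through `projIntertwiner`. -/
noncomputable def rangeTrivialization (hP : Continuous P) (hidem : ∀ x, IsIdempotentElem (P x))
    (x₀ : B) (e : (P x₀).range ≃L[𝕜] F) : Trivialization F (π F (RangeFiber P)) where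
  toFun p := (p.proj, e ((P x₀).rangeRestrict
    (Ring.inverse (projIntertwiner (P p.proj) (P x₀)) p.snd)))
  invFun z := ⟨z.1, (P z.1).rangeRestrict (e.symm z.2)⟩
  source := π F (RangeFiber P) ⁻¹' {x | IsUnit (projIntertwiner (P x) (P x₀))}
  target := {x | IsUnit (projIntertwiner (P x) (P x₀))} ×ˢ univ
  baseSet := {x | IsUnit (projIntertwiner (P x) (P x₀))}
  map_source' _ hp := ⟨hp, mem_univ _⟩
  map_target' _ hz := hz.1
  left_inv' := by
    rintro ⟨x, _, c, rfl⟩ hx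
    refine congrArg (TotalSpace.mk x) (Subtype.ext ?_)
    have h := DFunLike.congr_fun (mul_mul_inverse_projIntertwiner (hidem x) hx) (P x c)
    have hc := DFunLike.congr_fun (hidem x).eq c
    simp only [mul_apply_eq_comp] at h hc
    rw [hc] at h
    exact (congrArg (fun v : (P x₀).range ↦ P x v) (e.symm_apply_apply _)).trans h
  right_inv' := by
    rintro ⟨x, w⟩ ⟨hx, -⟩
    obtain ⟨⟨_, c, rfl⟩, rfl⟩ := e.surjective w
    refine congrArg (Prod.mk x) (congrArg e (Subtype.ext ?_))
    have h := DFunLike.congr_fun (inverse_projIntertwiner_mul_mul (hidem x₀) hx) (P x₀ c)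
    have hc := DFunLike.congr_fun (hidem x₀).eq c
    simp only [mul_apply_eq_comp] at h hc
    rw [hc] at h
    simpa [hc] using congrArg (P x₀) h
  open_source := (isOpen_setOf_isUnit_projIntertwiner hP _).preimage
    (continuous_fst.comp (isInducing_rangeFiber P).continuous)
  open_target := (isOpen_setOf_isUnit_projIntertwiner hP _).prod isOpen_univ
  open_baseSet := isOpen_setOf_isUnit_projIntertwiner hP _
  continuousOn_toFun := by
    have hincl := (isInducing_rangeFiber (F := F) P).continuous
    exact hincl.fst.continuousOn.prodMk <| (e.continuous.comp (P x₀).rangeRestrict.continuous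
      ).comp_continuousOn (((continuousOn_inverse_projIntertwiner hP _).comp
        hincl.fst.continuousOn fun _ hp ↦ hp).clm_apply hincl.snd.continuousOn)
  continuousOn_invFun := by
    refine ((isInducing_rangeFiber P).continuous_iff.2 ?_).continuousOn
    exact continuous_fst.prodMk <| (hP.comp continuous_fst).clm_apply <|
      continuous_subtype_val.comp <| e.symm.continuous.comp continuous_snd
  source_eq := rfl
  target_eq := rfl
  proj_toFun _ _ := rfl

lemma isLinear_rangeTrivialization (hP : Continuous P) (hidem : ∀ x, IsIdempotentElem (P x))
    (x₀ : B) (e : (P x₀).range ≃L[𝕜] F) : (rangeTrivialization hP hidem x₀ e).IsLinear 𝕜 where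
  linear x _ := ((e.toLinearMap ∘ₗ (P x₀).rangeRestrict.toLinearMap) ∘ₗ
    (Ring.inverse (projIntertwiner (P x) (P x₀))).toLinearMap ∘ₗ (P x).range.subtype).isLinear

/-- The bundle of ranges of a continuous family of projections on `E`, topologized as a subspace
of `B × E`. -/
@[reducible]
noncomputable def rangeFiberBundle (hP : Continuous P) (hidem : ∀ x, IsIdempotentElem (P x))
    (e : ∀ x, (P x).range ≃L[𝕜] F) : FiberBundle F (RangeFiber P) where
  totalSpaceMk_isInducing' := isInducing_totalSpaceMk_rangeFiber P
  trivializationAtlas' := range fun x ↦ rangeTrivialization hP hidem x (e x)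
  trivializationAt' x := rangeTrivialization hP hidem x (e x)
  mem_baseSet_trivializationAt' x := by
    change IsUnit (projIntertwiner (P x) (P x))
    exact projIntertwiner_self (hidem x) ▸ isUnit_one
  trivialization_mem_atlas' := mem_range_self

lemma vectorBundle_rangeFiber (hP : Continuous P) (hidem : ∀ x, IsIdempotentElem (P x))
    (e : ∀ x, (P x).range ≃L[𝕜] F) :
    letI := rangeFiberBundle hP hidem e
    VectorBundle 𝕜 F (RangeFiber P) := by
  let := rangeFiberBundle hP hidem e
  refine ⟨?_, ?_⟩
  · rintro _ ⟨x, rfl⟩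
    exact isLinear_rangeTrivialization hP hidem x (e x)
  · rintro _ _ ⟨x₀, rfl⟩ ⟨x₁, rfl⟩
    have := isLinear_rangeTrivialization hP hidem x₀ (e x₀)
    have := isLinear_rangeTrivialization hP hidem x₁ (e x₁)
    have hcont : ContinuousOn (fun x ↦ ((e x₁ : (P x₁).range →L[𝕜] F) ∘L (P x₁).rangeRestrict) ∘L
        (Ring.inverse (projIntertwiner (P x) (P x₁)) * P x) ∘L
        (P x₀).range.subtypeL ∘L ((e x₀).symm : F →L[𝕜] (P x₀).range))
        {x | IsUnit (projIntertwiner (P x) (P x₁))} :=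
      continuousOn_const.clm_comp <|
        ((continuousOn_inverse_projIntertwiner hP (P x₁)).mul hP.continuousOn).clm_comp
          continuousOn_const
    refine (hcont.mono inter_subset_right).congr fun x hx ↦ ?_
    ext w
    exact Trivialization.coordChangeL_apply' _ _ hx w

end ProjectionBundle

/-- The bundle of ranges of a continuous family of projections of `ℝ^κ`, with the metric
restricted from the standard inner product. -/
noncomputable def rangeMetricVectorBundle {X κ : Type} [TopologicalSpace X] [Fintype κ]
    {P : X → (κ → ℝ) →L[ℝ] κ → ℝ} (hP : Continuous P) (hidem : ∀ x, IsIdempotentElem (P x))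
    {m : ℕ} (hrank : ∀ x, finrank ℝ (P x).range = m) : MetricVectorBundle X m :=
  letI e (x : X) : (P x).range ≃L[ℝ] (Fin m → ℝ) := .ofFinrankEq (by simp [hrank])
  { fiber := RangeFiber P
    isFiberBundle := rangeFiberBundle hP hidem e
    isVectorBundle := vectorBundle_rangeFiber hP hidem e
    metric := fun x ↦ (dotProductBilin ℝ ℝ).domRestrict₁₂ (P x).range (P x).range
    metric_symm := fun _ _ _ ↦ dotProduct_comm _ _
    metric_posdef := fun x v hv ↦
      Matrix.dotProduct_self_star_pos_iff.2 fun h ↦ hv (Subtype.ext h)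
    metric_continuous := fun e' _ ↦ by
      let := rangeFiberBundle hP hidem e
      have hincl := (isInducing_rangeFiber (F := Fin m → ℝ) P).continuous.snd
      have hsymm := hincl.comp_continuousOn e'.continuousOn_symm
      have hfst := hsymm.comp (f := fun p : X × (Fin m → ℝ) × (Fin m → ℝ) ↦ (p.1, p.2.1))
        (by fun_prop) fun p hp ↦ ⟨hp, mem_univ _⟩
      have hsnd := hsymm.comp (f := fun p : X × (Fin m → ℝ) × (Fin m → ℝ) ↦ (p.1, p.2.2))
        (by fun_prop) fun p hp ↦ ⟨hp, mem_univ _⟩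
      exact (continuous_fst.dotProduct continuous_snd).comp_continuousOn (hfst.prodMk hsnd) }

section Complement

variable {E κ : Type*} [AddCommGroup E] [Module ℝ E] {q : E →ₗ[ℝ] E →ₗ[ℝ] ℝ} {t : κ → E}

/-- The analysis map `v ↦ (q v (t k))_k` of a family `t`, adjoint to the synthesis map
`c ↦ ∑ k, c k • t k`. -/
def analysis (q : E →ₗ[ℝ] E →ₗ[ℝ] ℝ) (t : κ → E) : E →ₗ[ℝ] κ → ℝ :=
  LinearMap.pi fun k ↦ q.flip (t k)

lemma analysis_apply (v : E) (k : κ) : analysis q t v k = q v (t k) := rfl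

variable [Fintype κ]

/-- For a Parseval frame, the orthogonal projection onto the kernel of the synthesis map. -/
noncomputable def synthesisKerProj (q : E →ₗ[ℝ] E →ₗ[ℝ] ℝ) (t : κ → E) :
    (κ → ℝ) →L[ℝ] κ → ℝ :=
  (LinearMap.id - analysis q t ∘ₗ Fintype.linearCombination ℝ t).toContinuousLinearMap

lemma synthesisKerProj_apply (c : κ → ℝ) :
    synthesisKerProj q t c = c - analysis q t (Fintype.linearCombination ℝ t c) := rfl

lemma analysis_dotProduct (v : E) (c : κ → ℝ) :
    analysis q t v ⬝ᵥ c = q v (Fintype.linearCombination ℝ t c) := by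
  simp [dotProduct, Fintype.linearCombination_apply, analysis_apply, mul_comm]

namespace IsParsevalFrame

lemma comp_equiv {κ' : Type*} [Fintype κ'] (ht : IsParsevalFrame q t) (σ : κ' ≃ κ) :
    IsParsevalFrame q (t ∘ σ) := fun v w ↦
  (σ.sum_comp fun k ↦ q v (t k) * q w (t k)).trans (ht v w)

variable (ht : IsParsevalFrame q t)
include ht

lemma analysis_dotProduct_analysis (v w : E) : analysis q t v ⬝ᵥ analysis q t w = q v w :=
  ht v w

variable (hpos : ∀ v, v ≠ 0 → 0 < q v v)
include hpos

lemma linearCombination_analysis (v : E) :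
    Fintype.linearCombination ℝ t (analysis q t v) = v := by
  have horth (w : E) : q w (Fintype.linearCombination ℝ t (analysis q t v) - v) = 0 := by
    rw [map_sub, ← analysis_dotProduct, ht.analysis_dotProduct_analysis, sub_self]
  by_contra hne
  exact (hpos _ (sub_ne_zero.2 hne)).ne' (horth _)

lemma linearCombination_synthesisKerProj (c : κ → ℝ) :
    Fintype.linearCombination ℝ t (synthesisKerProj q t c) = 0 := by
  rw [synthesisKerProj_apply, map_sub, ht.linearCombination_analysis hpos, sub_self]

lemma isIdempotentElem_synthesisKerProj : IsIdempotentElem (synthesisKerProj q t) := by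
  ext1 c
  rw [mul_apply_eq_comp, synthesisKerProj_apply (synthesisKerProj q t c),
    ht.linearCombination_synthesisKerProj hpos, map_zero, sub_zero]

lemma linearCombination_coe_range (c : (synthesisKerProj q t).range) :
    Fintype.linearCombination ℝ t c = 0 := by
  obtain ⟨_, c, rfl⟩ := c
  exact ht.linearCombination_synthesisKerProj hpos c

/-- The orthogonal decomposition of `ℝ^κ` into the image of the analysis map of a Parseval frame,
identified with `E`, and the kernel of the synthesis map. -/
noncomputable def prodRangeEquiv : (E × (synthesisKerProj q t).range) ≃ₗ[ℝ] (κ → ℝ) :=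
  .ofLinearMap ((analysis q t).coprod (synthesisKerProj q t).range.subtype)
    ((Fintype.linearCombination ℝ t).prod (synthesisKerProj q t).rangeRestrict)
    (LinearMap.ext fun c ↦ add_sub_cancel (analysis q t (Fintype.linearCombination ℝ t c)) c)
    (LinearMap.ext fun ⟨v, c⟩ ↦ by
      have hlc : Fintype.linearCombination ℝ t (analysis q t v + c) = v := by
        rw [map_add, ht.linearCombination_analysis hpos, ht.linearCombination_coe_range hpos,
          add_zero]
      refine Prod.ext hlc (Subtype.ext ?_)
      change synthesisKerProj q t (analysis q t v + c) = c
      rw [synthesisKerProj_apply, hlc, add_sub_cancel_left])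

lemma prodRangeEquiv_apply (p : E × (synthesisKerProj q t).range) :
    ht.prodRangeEquiv hpos p = analysis q t p.1 + p.2 := rfl

lemma prodRangeEquiv_symm_apply (c : κ → ℝ) :
    (ht.prodRangeEquiv hpos).symm c =
      (Fintype.linearCombination ℝ t c, (synthesisKerProj q t).rangeRestrict c) := rfl

lemma prodRangeEquiv_dotProduct (v w : E × (synthesisKerProj q t).range) :
    ht.prodRangeEquiv hpos v ⬝ᵥ ht.prodRangeEquiv hpos w =
      q v.1 w.1 + (v.2 : κ → ℝ) ⬝ᵥ (w.2 : κ → ℝ) := by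
  have hcross (x : E) (y : (synthesisKerProj q t).range) : analysis q t x ⬝ᵥ y = 0 := by
    rw [analysis_dotProduct, ht.linearCombination_coe_range hpos, map_zero]
  rw [prodRangeEquiv_apply, prodRangeEquiv_apply, add_dotProduct, dotProduct_add, dotProduct_add,
    ht.analysis_dotProduct_analysis, hcross, dotProduct_comm _ (analysis q t w.1), hcross,
    add_zero, zero_add]

lemma finrank_range_synthesisKerProj [FiniteDimensional ℝ E] :
    finrank ℝ E + finrank ℝ (synthesisKerProj q t).range = Fintype.card κ := by
  rw [← finrank_prod, (ht.prodRangeEquiv hpos).finrank_eq, finrank_fintype_fun_eq_card]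

end IsParsevalFrame

end Complement

namespace MetricVectorBundle

variable {X : Type} [TopologicalSpace X] {r : ℕ} (V : MetricVectorBundle X r)
  {κ : Type} {t : κ → ∀ x, V.fiber x}

section Continuity

variable (ht : ∀ k, Continuous fun x ↦ (⟨x, t k x⟩ : TotalSpace (Fin r → ℝ) V.fiber))
  {Y : Type*} [TopologicalSpace Y] {p : Y → X}
include ht

lemma continuous_analysis {σ : ∀ y, V.fiber (p y)}
    (hσ : Continuous fun y ↦ (⟨p y, σ y⟩ : TotalSpace (Fin r → ℝ) V.fiber)) :
    Continuous fun y ↦ analysis (V.metric (p y)) (fun k ↦ t k (p y)) (σ y) :=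
  have hp : Continuous p := (FiberBundle.continuous_proj (Fin r → ℝ) V.fiber).comp hσ
  continuous_pi fun k ↦ continuous_iff_continuousAt.2 fun _ ↦
    V.continuousAt_metric hσ.continuousAt ((ht k).comp hp).continuousAt

variable [Fintype κ]

lemma continuous_linearCombination (hp : Continuous p) {c : Y → κ → ℝ} (hc : Continuous c) :
    Continuous fun y ↦ (⟨p y, Fintype.linearCombination ℝ (fun k ↦ t k (p y)) (c y)⟩ :
      TotalSpace (Fin r → ℝ) V.fiber) :=
  continuous_iff_continuousAt.2 fun _ ↦ continuousAt_totalSpaceMk_sum_smul hp.continuousAt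
    (fun k ↦ ((continuous_apply k).comp hc).continuousAt) fun k ↦ ((ht k).comp hp).continuousAt

lemma continuous_synthesisKerProj :
    Continuous fun x ↦ synthesisKerProj (V.metric x) fun k ↦ t k x :=
  continuous_clm_apply.2 fun _ ↦ continuous_const.sub <|
    V.continuous_analysis ht (V.continuous_linearCombination ht continuous_id continuous_const)

end Continuity

variable [Fintype κ]

/-- The orthogonal complement of `V` in the trivial bundle `X × ℝ^κ` into which a continuous
Parseval frame embeds it. -/
noncomputable def complement
    (ht : ∀ k, Continuous fun x ↦ (⟨x, t k x⟩ : TotalSpace (Fin r → ℝ) V.fiber))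
    (hpar : ∀ x, IsParsevalFrame (V.metric x) fun k ↦ t k x)
    {N : ℕ} (hN : Fintype.card κ = r + N) : MetricVectorBundle X N :=
  rangeMetricVectorBundle (V.continuous_synthesisKerProj ht)
    (fun x ↦ (hpar x).isIdempotentElem_synthesisKerProj (V.metric_posdef x)) fun x ↦ by
      have h := (hpar x).finrank_range_synthesisKerProj (V.metric_posdef x)
      rw [V.finrank_fiber, hN] at h
      exact Nat.add_left_cancel h

variable {V} (ht : ∀ k, Continuous fun x ↦ (⟨x, t k x⟩ : TotalSpace (Fin r → ℝ) V.fiber))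
  (hpar : ∀ x, IsParsevalFrame (V.metric x) fun k ↦ t k x)
  {N : ℕ} (hN : Fintype.card κ = r + N)

/-- The fiberwise isometry `V ⊕ V.complement ≅ X × ℝ^κ`. -/
noncomputable def prodComplementEquiv (x : X) :
    (V.fiber x × (V.complement ht hpar hN).fiber x) ≃ₗ[ℝ] (κ → ℝ) :=
  (hpar x).prodRangeEquiv (V.metric_posdef x)

lemma prodComplementEquiv_dotProduct (x : X) (v w : V.fiber x × (V.complement ht hpar hN).fiber x) :
    prodComplementEquiv ht hpar hN x v ⬝ᵥ prodComplementEquiv ht hpar hN x w =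
      V.metric x v.1 w.1 + (V.complement ht hpar hN).metric x v.2 w.2 :=
  (hpar x).prodRangeEquiv_dotProduct (V.metric_posdef x) v w

lemma continuous_prodComplementEquiv : Continuous fun p : TotalSpace ((Fin r → ℝ) × (Fin N → ℝ))
    (V.fiber ×ᵇ (V.complement ht hpar hN).fiber) ↦
      (p.proj, prodComplementEquiv ht hpar hN p.proj p.snd) := by
  have hdiag := (FiberBundle.Prod.isInducing_diag (Fin r → ℝ) V.fiber (Fin N → ℝ)
    (V.complement ht hpar hN).fiber).continuous
  have hincl := (isInducing_rangeFiber (F := Fin N → ℝ)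
    fun x ↦ synthesisKerProj (V.metric x) fun k ↦ t k x).continuous.comp hdiag.snd
  exact hincl.fst.prodMk ((V.continuous_analysis ht hdiag.fst).add hincl.snd)

lemma continuous_prodComplementEquiv_symm : Continuous fun z : X × (κ → ℝ) ↦
    (⟨z.1, (prodComplementEquiv ht hpar hN z.1).symm z.2⟩ : TotalSpace
      ((Fin r → ℝ) × (Fin N → ℝ)) (V.fiber ×ᵇ (V.complement ht hpar hN).fiber)) :=
  (FiberBundle.Prod.isInducing_diag (Fin r → ℝ) V.fiber (Fin N → ℝ)
    (V.complement ht hpar hN).fiber).continuous_iff.2 <|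
    (V.continuous_linearCombination ht continuous_fst continuous_snd).prodMk <|
      (isInducing_rangeFiber (F := Fin N → ℝ) _).continuous_iff.2 <| continuous_fst.prodMk <|
        ((V.continuous_synthesisKerProj ht).comp continuous_fst).clm_apply continuous_snd

end MetricVectorBundle

theorem isometric_trivialization_of_metric_vector_bundle_general
    (F : Type*) [NormedAddCommGroup F] [NormedSpace ℝ F] [FiniteDimensional ℝ F]
    {X : Type} [TopologicalSpace X] [ChartedSpace F X] [T2Space X] [SecondCountableTopology X]
    {r : ℕ} (V : MetricVectorBundle X r) :
    ∃ (W : MetricVectorBundle X (finrank ℝ F * r))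
      (φ : ∀ x : X, (V.fiber x × W.fiber x) ≃ₗ[ℝ] (Fin (r + finrank ℝ F * r) → ℝ)),
      (∀ (x : X) (v w : V.fiber x × W.fiber x),
        ∑ i, φ x v i * φ x w i = V.metric x v.1 w.1 + W.metric x v.2 w.2) ∧
      Continuous (fun p : TotalSpace ((Fin r → ℝ) × (Fin (finrank ℝ F * r) → ℝ))
        (V.fiber ×ᵇ W.fiber) ↦ (p.proj, φ p.proj p.snd)) ∧
      Continuous (fun z : X × (Fin (r + finrank ℝ F * r) → ℝ) ↦
        (⟨z.1, (φ z.1).symm z.2⟩ :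
          TotalSpace ((Fin r → ℝ) × (Fin (finrank ℝ F * r) → ℝ)) (V.fiber ×ᵇ W.fiber))) := by
  have : LocallyCompactSpace X := ChartedSpace.locallyCompactSpace F X
  obtain ⟨O, hO, hframe, hOX⟩ := V.exists_finite_open_cover_hasOrthonormalFrameOn F
  obtain ⟨t, ht, hpar⟩ := V.exists_continuous_isParsevalFrame hO hframe hOX
  let σ : Fin (finrank ℝ F + 1) × Fin r ≃ Fin (r + finrank ℝ F * r) :=
    Fintype.equivFinOfCardEq (by rw [Fintype.card_prod, Fintype.card_fin, Fintype.card_fin]; ring)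
  have ht' (k) := ht (σ.symm k)
  have hpar' (x : X) := (hpar x).comp_equiv σ.symm
  exact ⟨V.complement ht' hpar' (Fintype.card_fin _),
    MetricVectorBundle.prodComplementEquiv ht' hpar' (Fintype.card_fin _),
    MetricVectorBundle.prodComplementEquiv_dotProduct ht' hpar' _,
    MetricVectorBundle.continuous_prodComplementEquiv ht' hpar' _,
    MetricVectorBundle.continuous_prodComplementEquiv_symm ht' hpar' _⟩

/-- Every metric vector bundle over a connected topological manifold embeds
isometrically as a direct summand of a trivial bundle: there are a metric vector
bundle `W` and a fiberwise-isometric vector bundle isomorphism `V ⊕ W ≅ X × ℝ^N`. -/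
theorem isometric_trivialization_of_metric_vector_bundle
    {n : ℕ} (X : Type) [TopologicalSpace X] [ChartedSpace (EuclideanSpace ℝ (Fin n)) X]
    [ConnectedSpace X] [T2Space X] [SecondCountableTopology X]
    (r : ℕ) (V : MetricVectorBundle X r) :
    ∃ (N : ℕ) (W : MetricVectorBundle X N)
      (φ : ∀ x : X, (V.fiber x × W.fiber x) ≃ₗ[ℝ] (Fin (r + N) → ℝ)),
      -- each `φ x` is a linear isometry from the orthogonal direct sum of the
      -- fiber inner products to the standard Euclidean inner product
      (∀ (x : X) (v w : V.fiber x × W.fiber x),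
        (∑ i, φ x v i * φ x w i) = V.metric x v.1 w.1 + W.metric x v.2 w.2) ∧
      -- `φ` is an isomorphism of topological vector bundles: the induced map on
      -- total spaces is a homeomorphism onto the trivial bundle `X × ℝ^{r+N}`
      Continuous (fun p : Bundle.TotalSpace ((Fin r → ℝ) × (Fin N → ℝ)) (V.fiber ×ᵇ W.fiber) =>
        (p.proj, φ p.proj p.snd)) ∧
      Continuous (fun q : X × (Fin (r + N) → ℝ) =>
        (Bundle.TotalSpace.mk q.1 ((φ q.1).symm q.2) :
          Bundle.TotalSpace ((Fin r → ℝ) × (Fin N → ℝ)) (V.fiber ×ᵇ W.fiber))) := by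
  exact ⟨_, isometric_trivialization_of_metric_vector_bundle_general (EuclideanSpace ℝ (Fin n)) V⟩
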